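/- Let (G, w) be a finite connected undirected simple graph with edge weights w : E(G) → ℕ, let D ⊆ V(G) be nonempty, let C ⊆ V(G) be finite, and let k, ℓ, g, r ∈ ℕ and Λ : C → ℕ with Λ(c) ≥ 1 for all c ∈ C. Then the following are equivalent: (i) there exist k' ≤ k closed walks p₁, …, p_{k'} in G, each starting at a vertex of D, and an assignment A : C → [k'] such that every client c lies on the walk p_{A(c)}, for every i ∈ [k'] the total demand Σ_{c ∈ A⁻¹(i)} Λ(c) is at most ℓ and the weight w(p_i) is at most g, and Σᵢ w(pᵢ) ≤ r; (ii) there exists a partition 𝒫 of C into at most k blocks with Σ_{c ∈ X} Λ(c) ≤ ℓ for every block X ∈ 𝒫, together with, for each block X ∈ 𝒫, a linear ordering (c₁, …, c_{ℓ_X}) of X and a depot d_X ∈ D, such that each tour weight t_X = w(d_X ⇝ c₁) + Σ_{i=1}^{ℓ_X − 1} w(c_i ⇝ c_{i+1}) + w(c_{ℓ_X} ⇝ d_X) satisfies t_X ≤ g, and Σ_{X ∈ 𝒫} t_X ≤ r. -/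

import Mathlib

/-!
Both directions compare walks with their lists of visited clients. Since `G` is connected, `wdist`
is attained by a walk and satisfies the triangle inequality.

From a routing to a partition: each walk `p i` serves the clients assigned to it, listed in an order
in which they occur along `p i`, i.e. as a sublist of `(p i).support`. By the triangle inequality
such a sublist has tour weight at most the weight of the walk (`chainWeight_le_of_sublist`). Indices
without clients are dropped.

From a partition to a routing: concatenating minimum weight walks between consecutive stops yields
a closed walk through the whole block whose weight is exactly the tour weight
(`exists_walk_through`).
-/

/-- Minimum weight of a walk from `u` to `v` in `G` under edge weights `w`. -/
noncomputable def wdist {V : Type*} (G : SimpleGraph V) (w : Sym2 V → ℕ) (u v : V) : ℕ :=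
  sInf {x | ∃ p : G.Walk u v, (p.edges.map w).sum = x}

/-- Sum of `f` over consecutive pairs of a list. -/
def chainWeight {V : Type*} (f : V → V → ℕ) : List V → ℕ
  | a :: b :: l => f a b + chainWeight f (b :: l)
  | _ => 0

theorem wdist_le {V : Type*} (G : SimpleGraph V) (w : Sym2 V → ℕ) {u v : V} (p : G.Walk u v) :
    wdist G w u v ≤ (p.edges.map w).sum :=
  Nat.sInf_le ⟨p, rfl⟩

theorem exists_walk_wdist {V : Type*} {G : SimpleGraph V} (hG : G.Connected) (w : Sym2 V → ℕ)
    (u v : V) : ∃ p : G.Walk u v, (p.edges.map w).sum = wdist G w u v := by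
  obtain ⟨q⟩ := hG.preconnected u v
  exact Nat.sInf_mem (s := {x | ∃ p : G.Walk u v, (p.edges.map w).sum = x}) ⟨_, q, rfl⟩

theorem wdist_self {V : Type*} (G : SimpleGraph V) (w : Sym2 V → ℕ) (u : V) :
    wdist G w u u = 0 := by
  simpa using wdist_le G w (SimpleGraph.Walk.nil : G.Walk u u)

theorem wdist_triangle {V : Type*} {G : SimpleGraph V} (hG : G.Connected) (w : Sym2 V → ℕ)
    (u x v : V) : wdist G w u v ≤ wdist G w u x + wdist G w x v := by
  obtain ⟨p, hp⟩ := exists_walk_wdist hG w u x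
  obtain ⟨q, hq⟩ := exists_walk_wdist hG w x v
  have h := wdist_le G w (p.append q)
  rw [SimpleGraph.Walk.edges_append, List.map_append, List.sum_append, hp, hq] at h
  exact h

/-- Moving the first stop of a tour from `x` to `u` costs at most the distance from `u` to `x`. -/
theorem chainWeight_change_head {V : Type*} {G : SimpleGraph V} (hG : G.Connected)
    (w : Sym2 V → ℕ) (u x : V) (l : List V) :
    chainWeight (wdist G w) (u :: l) ≤ wdist G w u x + chainWeight (wdist G w) (x :: l) := by
  cases l with
  | nil => simp [chainWeight]
  | cons a l =>
    have := wdist_triangle hG w u x a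
    simp only [chainWeight]
    omega

/-- Visiting only some of the vertices of a walk, in the order of the walk and along minimum weight
connections, is no heavier than the walk itself. -/
theorem chainWeight_le_of_sublist {V : Type*} {G : SimpleGraph V} (hG : G.Connected)
    (w : Sym2 V → ℕ) {u v : V} (p : G.Walk u v) :
    ∀ l : List V, l.Sublist p.support →
      chainWeight (wdist G w) (u :: (l ++ [v])) ≤ (p.edges.map w).sum := by
  induction p with
  | nil =>
    intro l hl
    rw [SimpleGraph.Walk.support_nil, List.sublist_singleton] at hl
    rcases hl with rfl | rfl <;> simp [chainWeight, wdist_self]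
  | @cons u x v h q ih =>
    -- This bound serves both cases: whether or not `l` starts with `u`.
    have key : ∀ l : List V, l.Sublist q.support →
        chainWeight (wdist G w) (u :: (l ++ [v])) ≤
          ((SimpleGraph.Walk.cons h q).edges.map w).sum := by
      intro l hl
      have h1 := ih l hl
      have h2 := chainWeight_change_head hG w u x (l ++ [v])
      have h3 : wdist G w u x ≤ w s(u, x) := by
        simpa using wdist_le G w (SimpleGraph.Walk.cons h SimpleGraph.Walk.nil)
      rw [SimpleGraph.Walk.edges_cons, List.map_cons, List.sum_cons]
      omega
    intro l hl
    rw [SimpleGraph.Walk.support_cons, List.sublist_cons_iff] at hl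
    rcases hl with hl | ⟨m, rfl, hl⟩
    · exact key l hl
    · simpa [chainWeight, wdist_self] using key m hl

/-- A tour is realised by a walk of the same weight through all its stops. -/
theorem exists_walk_through {V : Type*} {G : SimpleGraph V} (hG : G.Connected)
    (w : Sym2 V → ℕ) (v : V) (l : List V) :
    ∀ u : V, ∃ p : G.Walk u v, (∀ x ∈ l, x ∈ p.support) ∧
      (p.edges.map w).sum = chainWeight (wdist G w) (u :: (l ++ [v])) := by
  induction l with
  | nil =>
    intro u
    obtain ⟨p, hp⟩ := exists_walk_wdist hG w u v
    exact ⟨p, by simp, by simpa [chainWeight] using hp⟩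
  | cons a l ih =>
    intro u
    obtain ⟨p, hp⟩ := exists_walk_wdist hG w u a
    obtain ⟨q, hq, hqw⟩ := ih a
    refine ⟨p.append q, ?_, ?_⟩
    · intro x hx
      rw [SimpleGraph.Walk.mem_support_append_iff]
      rcases List.mem_cons.1 hx with rfl | hx
      · exact Or.inl p.end_mem_support
      · exact Or.inr (hq x hx)
    · rw [SimpleGraph.Walk.edges_append, List.map_append, List.sum_append, hp, hqw]
      rfl

/-- Load-and-Gas-Capacitated VRP routings of weight at most `r` exist iff there is a
partition of the clients into at most `k` blocks of demand at most `ℓ`, together with a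
linear ordering and a depot for each block, whose shortest-path tour weights are each at
most `g` and sum to at most `r`. -/
theorem stmt5 {V : Type*} [Fintype V] [DecidableEq V]
    (G : SimpleGraph V) (hG : G.Connected) (w : Sym2 V → ℕ)
    (D : Set V) (hD : D.Nonempty) (C : Finset V)
    (k ℓ g r : ℕ) (Λ : V → ℕ) (hΛ : ∀ c ∈ C, 1 ≤ Λ c) :
    (∃ k' ≤ k, ∃ (start : Fin k' → V)
        (p : (i : Fin k') → G.Walk (start i) (start i))
        (A : {c // c ∈ C} → Fin k'),
      (∀ i, start i ∈ D) ∧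
      (∀ c : {c // c ∈ C}, (c : V) ∈ (p (A c)).support) ∧
      (∀ i, ∑ c ∈ Finset.univ.filter (fun c : {c // c ∈ C} => A c = i), Λ c.1 ≤ ℓ) ∧
      (∀ i, ((p i).edges.map w).sum ≤ g) ∧
      (∑ i, ((p i).edges.map w).sum) ≤ r)
    ↔
    (∃ Ls : List (V × List V),
      Ls.length ≤ k ∧
      (∀ pr ∈ Ls, pr.1 ∈ D ∧ pr.2 ≠ [] ∧ pr.2.Nodup) ∧
      (Ls.map Prod.snd).Pairwise (fun l₁ l₂ => ∀ x ∈ l₁, x ∉ l₂) ∧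
      (∀ x, x ∈ C ↔ ∃ pr ∈ Ls, x ∈ pr.2) ∧
      (∀ pr ∈ Ls, (pr.2.map Λ).sum ≤ ℓ) ∧
      (∀ pr ∈ Ls, chainWeight (wdist G w) (pr.1 :: (pr.2 ++ [pr.1])) ≤ g) ∧
      (Ls.map (fun pr => chainWeight (wdist G w) (pr.1 :: (pr.2 ++ [pr.1])))).sum ≤ r) := by
  classical
  constructor
  · rintro ⟨k', hk, start, p, A, hD', hA, hload, hgas, hr⟩
    -- The clients of vehicle `i`, in the order of their last occurrences on its walk.
    let L : Fin k' → List V := fun i =>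
      (p i).support.dedup.filter (fun v => decide (∃ h : v ∈ C, A ⟨v, h⟩ = i))
    have hL : ∀ i v, v ∈ L i ↔ ∃ h : v ∈ C, A ⟨v, h⟩ = i := by
      intro i v
      simp only [L, List.mem_filter, List.mem_dedup, decide_eq_true_eq]
      refine ⟨fun h => h.2, fun h => ⟨?_, h⟩⟩
      obtain ⟨h, rfl⟩ := h
      exact hA ⟨v, h⟩
    have hnd : ∀ i, (L i).Nodup := fun i => (List.nodup_dedup _).filter _
    have hcw : ∀ i, chainWeight (wdist G w) (start i :: (L i ++ [start i])) ≤
        ((p i).edges.map w).sum := fun i =>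
      chainWeight_le_of_sublist hG w (p i) (L i)
        (List.filter_sublist.trans (List.dedup_sublist _))
    let I : List (Fin k') := (List.finRange k').filter (fun i => decide (L i ≠ []))
    have hI : ∀ i, i ∈ I ↔ L i ≠ [] := by
      intro i
      simp [I]
    have hIsub : I.Sublist (List.finRange k') := List.filter_sublist
    refine ⟨I.map (fun i => (start i, L i)), ?_, ?_, ?_, ?_, ?_, ?_, ?_⟩
    · have := hIsub.length_le
      rw [List.length_finRange] at this
      rw [List.length_map]
      omega
    · simp only [List.forall_mem_map]
      exact fun i hi => ⟨hD' i, (hI i).1 hi, hnd i⟩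
    · rw [List.map_map, List.pairwise_map]
      refine ((List.nodup_finRange k').sublist hIsub).imp ?_
      intro i j hij x hx hx'
      obtain ⟨h, rfl⟩ := (hL _ _).1 hx
      obtain ⟨h', rfl⟩ := (hL _ _).1 hx'
      exact hij rfl
    · intro x
      constructor
      · intro hx
        have hxL : x ∈ L (A ⟨x, hx⟩) := (hL _ _).2 ⟨hx, rfl⟩
        exact ⟨_, List.mem_map_of_mem ((hI _).2 (List.ne_nil_of_mem hxL)), hxL⟩
      · rintro ⟨pr, hpr, hx⟩
        obtain ⟨i, -, rfl⟩ := List.mem_map.1 hpr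
        exact ((hL i x).1 hx).1
    · simp only [List.forall_mem_map]
      intro i _
      refine le_trans ?_ (hload i)
      rw [← List.sum_toFinset Λ (hnd i)]
      refine le_of_le_of_eq ?_
        (Finset.sum_map (Finset.univ.filter fun c : {c // c ∈ C} => A c = i)
          (Function.Embedding.subtype _) Λ)
      refine Finset.sum_le_sum_of_subset ?_
      intro x hx
      obtain ⟨h, hi⟩ := (hL i x).1 (List.mem_toFinset.1 hx)
      exact Finset.mem_map.2 ⟨⟨x, h⟩, by simpa using hi, rfl⟩
    · simp only [List.forall_mem_map]
      exact fun i _ => (hcw i).trans (hgas i)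
    · rw [List.map_map]
      refine le_trans ?_ hr
      refine ((hIsub.map _).sum_le_sum (fun _ _ => Nat.zero_le _)).trans ?_
      rw [← List.ofFn_eq_map, List.sum_ofFn]
      exact Finset.sum_le_sum fun i _ => hcw i
  · rintro ⟨Ls, hk, hLs, -, hC, hload, hgas, hr⟩
    choose p hp hpw using fun i : Fin Ls.length =>
      exists_walk_through hG w (Ls[i]).1 (Ls[i]).2 (Ls[i]).1
    have hidx : ∀ c : {c // c ∈ C}, ∃ i : Fin Ls.length, (c : V) ∈ (Ls[i]).2 := by
      intro c
      obtain ⟨pr, hpr, hc⟩ := (hC c).1 c.2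
      obtain ⟨i, hi, rfl⟩ := List.mem_iff_getElem.1 hpr
      exact ⟨⟨i, hi⟩, hc⟩
    choose A hA using hidx
    have hmem : ∀ i : Fin Ls.length, Ls[i] ∈ Ls := fun i => List.getElem_mem _
    refine ⟨Ls.length, hk, fun i => (Ls[i]).1, p, A, fun i => (hLs _ (hmem i)).1,
      fun c => hp _ _ (hA c), ?_, fun i => (hpw i).trans_le (hgas _ (hmem i)), ?_⟩
    · intro i
      refine le_trans ?_ (hload _ (hmem i))
      rw [← List.sum_toFinset Λ (hLs _ (hmem i)).2.2]
      refine (Finset.sum_map (Finset.univ.filter fun c : {c // c ∈ C} => A c = i)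
        (Function.Embedding.subtype _) Λ).symm.trans_le ?_
      refine Finset.sum_le_sum_of_subset ?_
      intro x hx
      obtain ⟨c, hc, rfl⟩ := Finset.mem_map.1 hx
      obtain rfl := (Finset.mem_filter.1 hc).2
      exact List.mem_toFinset.2 (hA c)
    · refine le_trans (le_of_eq ?_) hr
      rw [Finset.sum_congr rfl fun i _ => hpw i]
      exact Fin.sum_univ_fun_getElem Ls
        (fun pr => chainWeight (wdist G w) (pr.1 :: (pr.2 ++ [pr.1])))
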